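/- Let n ≥ 2, k ≥ 1 and m ≥ 1 be natural numbers, and let f : ℝ^n → ℝ be continuously differentiable with support contained in [0,1]^n. Then there exists a function F : ℝ^n → ℝ realized by a ReLU network with at most (m+5)·⌈log₂(n·(2k+1))⌉ + 3 hidden layers, whose hidden-layer widths are at most 6n·(2k+1)^n (more precisely of the form: first hidden layer of width 3n(2k+1), second of width n(2k+1), then layers of width 6n(2k+1)^n, a layer of width (2k+1)^n, and output dimension 1), such that sup_{x ∈ [0,1]^n} |f(x) - F(x)| ≤ ‖f‖_∞ · 3^n · 2^{-m} · (2k+1) + (max_{j=1,…,n} ‖∂_{x_j} f‖_∞) · n/(2k), where ‖f‖_∞ = max{|f(x)| : x ∈ [0,1]^n} and ‖∂_{x_j} f‖_∞ is the supremum norm of the j-th partial derivative over ℝ^n. -/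

import Mathlib

/-- The ReLU function `σ(x) = max{x, 0}`. -/
noncomputable def relu (x : ℝ) : ℝ := max x 0

/-- `RealizedByReluNet n₀ ws F` means the scalar-valued function `F : ℝ^{n₀} → ℝ` is exactly
a ReLU network with hidden layers of widths given by the list `ws`:
`F = W_{L+1} ∘ σ ∘ W_L ∘ ⋯ ∘ σ ∘ W_1` with affine maps `W_i` (given by a matrix and a bias
vector) and the ReLU `σ` applied componentwise. -/
def RealizedByReluNet : (n0 : ℕ) → List ℕ → ((Fin n0 → ℝ) → ℝ) → Prop
  | n0, [], F => ∃ (a : Fin n0 → ℝ) (b : ℝ), ∀ x, F x = ∑ j, a j * x j + b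
  | n0, w :: ws, F => ∃ (A : Matrix (Fin w) (Fin n0) ℝ) (b : Fin w → ℝ)
      (G : (Fin w → ℝ) → ℝ), RealizedByReluNet w ws G ∧
      ∀ x, F x = G (fun i => relu (A.mulVec x i + b i))

/-- `F` can be computed by a ReLU network with hidden widths `ws` that reads its input through an
arbitrary affine map. -/
def RealizedAfterAffine {ι : Type*} (ws : List ℕ) (F : (ι → ℝ) → ℝ) : Prop :=
  ∀ (n₀ : ℕ) (L : (Fin n₀ → ℝ) →ᵃ[ℝ] (ι → ℝ)), RealizedByReluNet n₀ ws (fun x => F (L x))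

theorem affineMap_eq_mulVec_add {ι : Type*} {n₀ : ℕ} (L : (Fin n₀ → ℝ) →ᵃ[ℝ] (ι → ℝ))
    (x : Fin n₀ → ℝ) : L x = (LinearMap.toMatrix' L.linear).mulVec x + L 0 := by
  rw [LinearMap.toMatrix'_mulVec]
  exact congrFun (AffineMap.decomp L) x

theorem RealizedAfterAffine.comp {ι κ : Type*} {ws : List ℕ} {F : (κ → ℝ) → ℝ}
    (hF : RealizedAfterAffine ws F) (M : (ι → ℝ) →ᵃ[ℝ] (κ → ℝ)) :
    RealizedAfterAffine ws (fun y => F (M y)) :=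
  fun n₀ L => hF n₀ (M.comp L)

theorem realizedAfterAffine_nil {ι : Type*} [Fintype ι] (c : ι → ℝ) :
    RealizedAfterAffine [] (fun y : ι → ℝ => ∑ i, c i * y i) := by
  intro n₀ L
  refine ⟨fun j => ∑ i, c i * LinearMap.toMatrix' L.linear i j, ∑ i, c i * L 0 i, fun x => ?_⟩
  simp only [affineMap_eq_mulVec_add L x, Pi.add_apply, Matrix.mulVec, dotProduct, mul_add,
    Finset.sum_add_distrib, Finset.mul_sum, Finset.sum_mul]
  rw [Finset.sum_comm]
  simp only [mul_assoc]

theorem RealizedAfterAffine.cons {κ : Type*} [Fintype κ] [Nonempty κ] {ws : List ℕ}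
    {G : (κ → ℝ) → ℝ} (hG : RealizedAfterAffine ws G) {w : ℕ} (hw : Fintype.card κ ≤ w) :
    RealizedAfterAffine (w :: ws) (fun y => G (fun i => relu (y i))) := by
  intro n₀ L
  obtain ⟨e⟩ : Nonempty (κ ↪ Fin w) :=
    Function.Embedding.nonempty_of_card_le (by simpa using hw)
  let r : Fin w → κ := Function.invFun e
  let L' := (LinearMap.funLeft ℝ ℝ r).toAffineMap.comp L
  refine ⟨LinearMap.toMatrix' L'.linear, L' 0, fun z => G (fun i => z (e i)),
    hG w (LinearMap.funLeft ℝ ℝ e).toAffineMap, fun x => ?_⟩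
  refine congrArg G (funext fun i => congrArg relu ?_)
  rw [← Pi.add_apply, ← affineMap_eq_mulVec_add L' x]
  simp [L', r, LinearMap.funLeft_apply, Function.leftInverse_invFun e.injective i]

theorem RealizedAfterAffine.cons_max {J : Type*} [Fintype J] [Nonempty J] {ws : List ℕ}
    {G : (J → ℝ) → ℝ} (hG : RealizedAfterAffine ws G) (s : J → J) {w : ℕ}
    (hw : 2 * Fintype.card J ≤ w) :
    RealizedAfterAffine (w :: ws)
      (fun P => G (fun q => relu (P q) + relu (P (s q) - P q))) := by
  let D : (J ⊕ J → ℝ) →ₗ[ℝ] (J → ℝ) :=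
    LinearMap.funLeft ℝ ℝ Sum.inl + LinearMap.funLeft ℝ ℝ Sum.inr
  let π : J → (J → ℝ) →ₗ[ℝ] ℝ := fun q => LinearMap.proj q
  let E : (J → ℝ) →ₗ[ℝ] (J ⊕ J → ℝ) := LinearMap.pi (Sum.elim π fun q => π (s q) - π q)
  have h := ((hG.comp D.toAffineMap).cons (w := w) (by simpa [two_mul] using hw)).comp
    E.toAffineMap
  exact h

theorem relu_add_relu_sub {a b : ℝ} (ha : 0 ≤ a) : relu a + relu (b - a) = max a b := by
  unfold relu
  rw [max_eq_left ha, ← max_add_add_left]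
  simp [max_comm]

/-- Maxima over the first `2 ^ r` coordinates can be computed in `r` layers. -/
theorem RealizedAfterAffine.exists_max {K : Type*} [Fintype K] [Nonempty K] {n : ℕ} [NeZero n]
    {ws : List ℕ} {H : (K → ℝ) → ℝ} (hH : RealizedAfterAffine ws H) {w : ℕ}
    (hw : 2 * (Fintype.card K * n) ≤ w) (r : ℕ) :
    ∃ G : (K × Fin n → ℝ) → ℝ, RealizedAfterAffine (List.replicate r w ++ ws) G ∧
      ∀ P : K × Fin n → ℝ, (∀ q, 0 ≤ P q) → ∃ y : K → ℝ, G P = H y ∧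
        ∀ a, (∀ j : Fin n, (j : ℕ) < 2 ^ r → P (a, j) ≤ y a) ∧ ∃ j, y a = P (a, j) := by
  induction r with
  | zero =>
    refine ⟨fun P => H (fun a => P (a, 0)),
      hH.comp (LinearMap.funLeft ℝ ℝ (fun a : K => (a, (0 : Fin n)))).toAffineMap,
      fun P _ => ⟨_, rfl, fun a => ⟨fun j hj => ?_, 0, rfl⟩⟩⟩
    have : j = 0 := by
      apply Fin.ext
      simpa using hj
    rw [this]
  | succ r ih =>
    obtain ⟨G, hG, hGP⟩ := ih
    let s : K × Fin n → K × Fin n :=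
      fun q => (q.1, if h : (q.2 : ℕ) + 2 ^ r < n then ⟨q.2 + 2 ^ r, h⟩ else q.2)
    refine ⟨_, hG.cons_max s (w := w) (by simpa using hw), fun P hP => ?_⟩
    have hmax : (fun q => relu (P q) + relu (P (s q) - P q)) = fun q => max (P q) (P (s q)) :=
      funext fun q => relu_add_relu_sub (hP q)
    obtain ⟨y, hy, hya⟩ := hGP (fun q => max (P q) (P (s q)))
      (fun q => (hP q).trans (le_max_left _ _))
    refine ⟨y, by rw [hmax, hy], fun a => ⟨fun j hj => ?_, ?_⟩⟩
    · rcases lt_or_ge (j : ℕ) (2 ^ r) with h | h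
      · exact (le_max_left _ _).trans ((hya a).1 j h)
      · have hs : s (a, ⟨(j : ℕ) - 2 ^ r, by omega⟩) = (a, j) := by
          have : (j : ℕ) - 2 ^ r + 2 ^ r = j := by omega
          simp [s, this]
        have h' := (hya a).1 ⟨(j : ℕ) - 2 ^ r, by omega⟩ (by
          rw [pow_succ] at hj
          change (j : ℕ) - 2 ^ r < 2 ^ r
          omega)
        rw [hs] at h'
        exact (le_max_right _ _).trans h'
    · obtain ⟨j, hj⟩ := (hya a).2
      rcases max_choice (P (a, j)) (P (s (a, j))) with h | h
      · exact ⟨j, hj.trans h⟩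
      · exact ⟨(s (a, j)).2, hj.trans h⟩

/-- A function whose partial derivatives are bounded by `C` is `n * C`-Lipschitz for the sup
norm. -/
theorem abs_sub_le_of_partial_deriv_le {n : ℕ} {f : (Fin n → ℝ) → ℝ} (hf : Differentiable ℝ f)
    {C : ℝ} (hC : ∀ (j : Fin n) (x : Fin n → ℝ), |fderiv ℝ f x (Pi.single j 1)| ≤ C)
    (hC0 : 0 ≤ C) (x y : Fin n → ℝ) : |f x - f y| ≤ n * C * ‖x - y‖ := by
  refine Convex.norm_image_sub_le_of_norm_fderiv_le (𝕜 := ℝ) (s := Set.univ)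
    (fun z _ => hf z) (fun z _ => ?_) convex_univ trivial trivial
  refine ContinuousLinearMap.opNorm_le_bound _ (by positivity) fun v => ?_
  have hv : v = ∑ j, v j • (Pi.single j (1 : ℝ) : Fin n → ℝ) := by
    simpa using (pi_eq_sum_univ' v)
  calc ‖fderiv ℝ f z v‖ = ‖∑ j, v j * fderiv ℝ f z (Pi.single j 1)‖ := by
        conv_lhs => rw [hv]
        simp only [map_sum, map_smul, smul_eq_mul]
    _ ≤ ∑ _j : Fin n, ‖v‖ * C := by
        refine norm_sum_le_of_le _ fun j _ => ?_
        rw [norm_mul]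
        exact mul_le_mul (norm_le_pi_norm v j) (hC j z) (norm_nonneg _) (norm_nonneg _)
    _ = n * C * ‖v‖ := by simp; ring

/-- The nodal functions of the Freudenthal triangulation of a grid form a partition of unity: the
weight of `i` is the length of the set of shifts `u ∈ [0, 1)` with `⌊v j + u⌋ = i j` for all
`j`. -/
theorem sum_nodal_eq_one {n N : ℕ} [NeZero n] {v : Fin n → ℝ} (hv0 : ∀ j, 0 ≤ v j)
    (hvN : ∀ j, v j ≤ N) {y z : (Fin n → Fin (N + 1)) → ℝ}
    (hy : ∀ i, (∀ j, relu (v j - (i j : ℕ)) ≤ y i) ∧ ∃ j, y i = relu (v j - (i j : ℕ)))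
    (hz : ∀ i, (∀ j, relu ((i j : ℕ) - v j) ≤ z i) ∧ ∃ j, z i = relu ((i j : ℕ) - v j)) :
    ∑ i, relu (1 - y i - z i) = 1 := by
  have hmem : ∀ i u, u ∈ Set.Ico (z i) (1 - y i) ↔
      u ∈ Set.Ico (0 : ℝ) 1 ∧ ∀ j, ⌊v j + u⌋₊ = (i j : ℕ) := by
    intro i u
    constructor
    · rintro ⟨h1, h2⟩
      have h3 : ∀ j, (i j : ℕ) - v j ≤ u ∧ 0 ≤ u ∧ v j - (i j : ℕ) < 1 - u ∧ 0 < 1 - u := by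
        intro j
        have ha := (hy i).1 j
        have hb := (hz i).1 j
        simp only [relu, max_le_iff] at ha hb
        refine ⟨?_, ?_, ?_, ?_⟩ <;> linarith
      refine ⟨⟨(h3 0).2.1, by linarith [(h3 0).2.2.2]⟩, fun j => ?_⟩
      obtain ⟨ha, hb, hc, -⟩ := h3 j
      rw [Nat.floor_eq_iff (add_nonneg (hv0 j) hb)]
      constructor <;> linarith
    · rintro ⟨⟨h0, h1⟩, h⟩
      have h3 : ∀ j, ((i j : ℕ) : ℝ) ≤ v j + u ∧ v j + u < (i j : ℕ) + 1 := fun j =>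
        (Nat.floor_eq_iff (add_nonneg (hv0 j) h0)).1 (h j)
      obtain ⟨j, hj⟩ := (hy i).2
      obtain ⟨j', hj'⟩ := (hz i).2
      refine ⟨?_, ?_⟩
      · rw [hj']
        exact max_le (by linarith [(h3 j').1]) h0
      · have : y i < 1 - u := by
          rw [hj]
          exact max_lt (by linarith [(h3 j).2]) (by linarith)
        linarith
  have hunion : (⋃ i ∈ (Finset.univ : Finset (Fin n → Fin (N + 1))),
      Set.Ico (z i) (1 - y i)) = Set.Ico (0 : ℝ) 1 := by
    ext u
    simp only [Set.mem_iUnion, Finset.mem_univ, exists_prop, true_and, hmem]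
    refine ⟨fun ⟨_, h⟩ => h.1, fun hu => ⟨fun j => ⟨⌊v j + u⌋₊, ?_⟩, hu, fun j => rfl⟩⟩
    rw [Nat.floor_lt (add_nonneg (hv0 j) hu.1)]
    push_cast
    linarith [hvN j, hu.2]
  have hdisj : Set.PairwiseDisjoint
      (↑(Finset.univ : Finset (Fin n → Fin (N + 1)))) fun i => Set.Ico (z i) (1 - y i) := by
    intro i _ i' _ hne
    refine Set.disjoint_left.2 fun u hu hu' => hne ?_
    funext j
    exact Fin.ext ((((hmem i u).1 hu).2 j).symm.trans (((hmem i' u).1 hu').2 j))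
  have h := MeasureTheory.measureReal_biUnion_finset (μ := MeasureTheory.volume) hdisj
    (fun i _ => measurableSet_Ico) (fun i _ => by simp)
  rw [hunion] at h
  simp only [Real.volume_real_Ico, sub_zero] at h
  rw [max_eq_left zero_le_one] at h
  exact h.symm

theorem abs_sub_sum_nodal_le {n N : ℕ} [NeZero n] (hN : 0 < N) {f : (Fin n → ℝ) → ℝ}
    (hf : Differentiable ℝ f) {C : ℝ}
    (hC : ∀ (j : Fin n) (x : Fin n → ℝ), |fderiv ℝ f x (Pi.single j 1)| ≤ C)
    {x : Fin n → ℝ} (hx0 : ∀ j, 0 ≤ x j) (hx1 : ∀ j, x j ≤ 1)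
    {y z : (Fin n → Fin (N + 1)) → ℝ}
    (hy : ∀ i, (∀ j, relu (N * x j - (i j : ℕ)) ≤ y i) ∧ ∃ j, y i = relu (N * x j - (i j : ℕ)))
    (hz : ∀ i, (∀ j, relu ((i j : ℕ) - N * x j) ≤ z i) ∧
      ∃ j, z i = relu ((i j : ℕ) - N * x j)) :
    |f x - ∑ i, f (fun j => (i j : ℕ) / N) * relu (1 - y i - z i)| ≤ C * n / N := by
  have hN' : (0 : ℝ) < N := by exact_mod_cast hN
  have hC0 : 0 ≤ C := (abs_nonneg _).trans (hC 0 0)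
  have hsum := sum_nodal_eq_one (N := N) (v := fun j => N * x j)
    (fun j => mul_nonneg hN'.le (hx0 j)) (fun j => by nlinarith [hx1 j]) hy hz
  have heq : f x - ∑ i, f (fun j => (i j : ℕ) / N) * relu (1 - y i - z i)
      = ∑ i, (f x - f (fun j => (i j : ℕ) / N)) * relu (1 - y i - z i) := by
    simp only [sub_mul, Finset.sum_sub_distrib]
    rw [← Finset.mul_sum, hsum, mul_one]
  rw [heq]
  calc _ ≤ ∑ i, C * n / N * relu (1 - y i - z i) := by
        refine (Finset.abs_sum_le_sum_abs _ _).trans (Finset.sum_le_sum fun i _ => ?_)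
        have hr : 0 ≤ relu (1 - y i - z i) := le_max_right _ _
        rw [abs_mul, abs_of_nonneg hr]
        rcases hr.eq_or_lt with h | h
        · simp [← h]
        refine mul_le_mul_of_nonneg_right ?_ hr
        have hpos : 0 < 1 - y i - z i := (lt_max_iff.1 h).resolve_right (lt_irrefl 0)
        refine (abs_sub_le_of_partial_deriv_le hf hC hC0 _ _).trans ?_
        have hd : ‖x - fun j => ((i j : ℕ) : ℝ) / N‖ ≤ 1 / N := by
          refine (pi_norm_le_iff_of_nonneg (by positivity)).2 fun j => ?_
          have ha := (hy i).1 j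
          have hb := (hz i).1 j
          simp only [relu, max_le_iff] at ha hb
          have : x j - ((i j : ℕ) : ℝ) / N = (N * x j - (i j : ℕ)) / N := by field_simp
          rw [Pi.sub_apply, this, Real.norm_eq_abs, abs_div, abs_of_pos hN']
          gcongr
          rw [abs_le]
          constructor <;> linarith
        calc n * C * ‖x - fun j => ((i j : ℕ) : ℝ) / N‖ ≤ n * C * (1 / N) := by gcongr
          _ = C * n / N := by ring
    _ = C * n / N := by rw [← Finset.mul_sum, hsum, mul_one]

/-- The signed grid offsets `N x_j - i_j` (for `false`) and `i_j - N x_j` (for `true`). -/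
noncomputable def gridOffset (n N : ℕ) :
    (Fin n → ℝ) →ᵃ[ℝ] (((Fin n → Fin (N + 1)) × Bool) × Fin n → ℝ) :=
  (LinearMap.pi fun q : ((Fin n → Fin (N + 1)) × Bool) × Fin n =>
      (if q.1.2 then (-N : ℝ) else N) •
        (LinearMap.proj q.2 : (Fin n → ℝ) →ₗ[ℝ] ℝ)).toAffineMap +
    AffineMap.const ℝ (Fin n → ℝ) fun q : ((Fin n → Fin (N + 1)) × Bool) × Fin n =>
      if q.1.2 then ((q.1.1 q.2 : ℕ) : ℝ) else -((q.1.1 q.2 : ℕ) : ℝ)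

/-- **Theorem 2 (multi-dimensional case).** For `f ∈ C¹(ℝⁿ)` supported in `[0,1]ⁿ`,
with `B` a bound for `|f|` on `[0,1]ⁿ` (best such: `‖f‖_∞`) and `C` a bound for all
partial derivatives on `ℝⁿ` (best such: `max_j ‖∂ⱼf‖_∞`), there is a ReLU network `F` with
at most `(m+5)⌈log₂(n(2k+1))⌉ + 3` hidden layers — widths of the form
`3n(2k+1), n(2k+1), 6n(2k+1)ⁿ, …, 6n(2k+1)ⁿ, (2k+1)ⁿ`, all at most `6n(2k+1)ⁿ` — such that
`sup_{x ∈ [0,1]ⁿ} |f(x) - F(x)| ≤ B·3ⁿ·2^{-m}·(2k+1) + C·n/(2k)`. -/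
theorem deep_network_approximation (n k m : ℕ) (hn : 2 ≤ n) (hk : 1 ≤ k) (hm : 1 ≤ m)
    (f : (Fin n → ℝ) → ℝ) (hf : ContDiff ℝ 1 f)
    (hsupp : Function.support f ⊆ Set.Icc (fun _ => (0 : ℝ)) (fun _ => 1))
    (B C : ℝ)
    (hB : ∀ x ∈ Set.Icc (fun _ => (0 : ℝ)) (fun _ => 1), |f x| ≤ B)
    (hC : ∀ (j : Fin n) (x : Fin n → ℝ), |fderiv ℝ f x (Pi.single j 1)| ≤ C) :
    ∃ (F : (Fin n → ℝ) → ℝ) (t : ℕ),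
      t + 3 ≤ (m + 5) * Nat.clog 2 (n * (2 * k + 1)) + 3 ∧
      RealizedByReluNet n
        (3 * n * (2 * k + 1) :: n * (2 * k + 1) ::
          (List.replicate t (6 * n * (2 * k + 1) ^ n) ++ [(2 * k + 1) ^ n])) F ∧
      ∀ x ∈ Set.Icc (fun _ => (0 : ℝ)) (fun _ => 1),
        |f x - F x| ≤ B * 3 ^ n / 2 ^ m * (2 * k + 1) + C * n / (2 * k) := by
  have hn0 : NeZero n := ⟨by omega⟩
  let N := 2 * k
  let I := Fin n → Fin (N + 1)
  let c : I → ℝ := fun i => f (fun j => ((i j : ℕ) : ℝ) / (N : ℕ))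
  let M : (I × Bool → ℝ) →ᵃ[ℝ] (I → ℝ) :=
    AffineMap.const ℝ _ 1 - (LinearMap.funLeft ℝ ℝ (fun i : I => (i, false)) +
      LinearMap.funLeft ℝ ℝ (fun i : I => (i, true))).toAffineMap
  have hH := ((realizedAfterAffine_nil c).cons (w := (2 * k + 1) ^ n) (by simp [I, N])).comp M
  obtain ⟨G, hG, hGP⟩ := hH.exists_max (n := n) (w := 6 * n * (2 * k + 1) ^ n)
    (by simp only [Fintype.card_prod, Fintype.card_bool, I, N, Fintype.card_fun, Fintype.card_fin]
        nlinarith [Nat.zero_le (n * (2 * k + 1) ^ n)]) (Nat.clog 2 n)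
  have hnet := (((hG.cons (w := 6 * n * (2 * k + 1) ^ n) (by
      simp only [Fintype.card_prod, Fintype.card_bool, I, N, Fintype.card_fun, Fintype.card_fin]
      nlinarith [Nat.zero_le (n * (2 * k + 1) ^ n)])).comp (gridOffset n N)).cons
    (w := n * (2 * k + 1)) (by rw [Fintype.card_fin]; nlinarith)).cons
    (w := 3 * n * (2 * k + 1)) (by rw [Fintype.card_fin]; nlinarith)
  refine ⟨_, Nat.clog 2 n + 1, ?_, hnet n (AffineMap.id ℝ _), fun x hx => ?_⟩
  · have h1 : Nat.clog 2 n ≤ Nat.clog 2 (n * (2 * k + 1)) := Nat.clog_mono_right 2 (by nlinarith)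
    have h2 : 0 < Nat.clog 2 n := Nat.clog_pos (by norm_num) hn
    nlinarith [Nat.zero_le (m * Nat.clog 2 (n * (2 * k + 1)))]
  · have hB0 : 0 ≤ B := (abs_nonneg _).trans (hB x hx)
    have hx0 : ∀ j, 0 ≤ x j := hx.1
    have hx1 : ∀ j, x j ≤ 1 := hx.2
    have hrelu : (fun j => relu (relu (x j))) = x := by
      funext j
      simp [relu, hx0 j]
    obtain ⟨y, hGy, hy⟩ := hGP (fun q => relu (gridOffset n N x q)) (fun q => le_max_right _ _)
    have hlt : ∀ j : Fin n, (j : ℕ) < 2 ^ Nat.clog 2 n := fun j =>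
      j.2.trans_le (Nat.le_pow_clog (by norm_num) n)
    have hfalse : ∀ (i : I) (j : Fin n),
        gridOffset n N x ((i, false), j) = N * x j - (i j : ℕ) := fun i j => by
      simp [gridOffset, sub_eq_add_neg]
    have htrue : ∀ (i : I) (j : Fin n),
        gridOffset n N x ((i, true), j) = (i j : ℕ) - N * x j := fun i j => by
      simp [gridOffset]
      ring
    have herr := abs_sub_sum_nodal_le (N := N) (by omega) (hf.differentiable (by norm_num)) hC
      hx0 hx1 (y := fun i => y (i, false)) (z := fun i => y (i, true))
      (fun i => by simpa only [hfalse, hlt, forall_const] using hy (i, false))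
      (fun i => by simpa only [htrue, hlt, forall_const] using hy (i, true))
    simp only [AffineMap.id_apply, hrelu]
    rw [hGy]
    have hM : ∀ i, M y i = 1 - y (i, false) - y (i, true) := fun i => by
      simp [M, LinearMap.funLeft_apply, sub_sub]
    simp only [hM]
    have hpos : 0 ≤ B * 3 ^ n / 2 ^ m * (2 * k + 1) := by positivity
    have hcast : ((N : ℕ) : ℝ) = 2 * k := by simp [N]
    rw [← hcast] at hpos ⊢
    exact herr.trans (le_add_of_nonneg_left hpos)
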